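/- The credit passing cost model (⇓ᶜ, Φᶜ, ⌊·⌋ᶜ) is sound: whenever Γ : e ⇓ᶜ_n Δ : v, there exists k with ⌊Γ⌋ᶜ : e ⇓ᴿ_k ⌊Δ⌋ᶜ : v and k + Φᶜ(Δ) − Φᶜ(Γ) ≤ n. -/

import Mathlib

/-! ## Syntax of the fine-grain call-by-value lambda calculus with thunks -/

mutual
inductive Val : Type where
  | var : String → Val
  | ptr : Nat → Val
  | unit : Val
  | inl : Val → Val
  | inr : Val → Val
  | pair : Val → Val → Val
  | lam : String → Expr → Val

inductive HeapVal : Type where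
  | fold : Val → HeapVal
  | memo : Val → HeapVal
  | lazy : String → Val → HeapVal

inductive Expr : Type where
  | ret : Val → Expr
  | alloc : HeapVal → Expr
  | letE : String → Expr → Expr → Expr
  | caseE : Val → String → Expr → String → Expr → Expr
  | splitE : Val → String → String → Expr → Expr
  | app : Val → Val → Expr
  | unfoldE : Val → Expr
  | call : String → Val → Expr
  | force : Val → Expr
  | save : Nat → Val → Expr
  | spend : Nat → Val → Expr → Expr
  | pass : Val → Expr
end

/-! ## Capture-avoiding substitution (values substituted are closed) -/

mutual
def substV (v : Val) (x : String) : Val → Val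
  | .var y => if y = x then v else .var y
  | .ptr a => .ptr a
  | .unit => .unit
  | .inl w => .inl (substV v x w)
  | .inr w => .inr (substV v x w)
  | .pair w₁ w₂ => .pair (substV v x w₁) (substV v x w₂)
  | .lam y e => if y = x then .lam y e else .lam y (substE v x e)

def substH (v : Val) (x : String) : HeapVal → HeapVal
  | .fold w => .fold (substV v x w)
  | .memo w => .memo (substV v x w)
  | .lazy F w => .lazy F (substV v x w)

def substE (v : Val) (x : String) : Expr → Expr
  | .ret w => .ret (substV v x w)
  | .alloc hv => .alloc (substH v x hv)
  | .letE y e₁ e₂ => .letE y (substE v x e₁) (if y = x then e₂ else substE v x e₂)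
  | .caseE w y₁ e₁ y₂ e₂ =>
      .caseE (substV v x w) y₁ (if y₁ = x then e₁ else substE v x e₁)
        y₂ (if y₂ = x then e₂ else substE v x e₂)
  | .splitE w y₁ y₂ e =>
      .splitE (substV v x w) y₁ y₂ (if y₁ = x ∨ y₂ = x then e else substE v x e)
  | .app w₁ w₂ => .app (substV v x w₁) (substV v x w₂)
  | .unfoldE w => .unfoldE (substV v x w)
  | .call F w => .call F (substV v x w)
  | .force w => .force (substV v x w)
  | .save n w => .save n (substV v x w)
  | .spend n w e => .spend n (substV v x w) (substE v x e)
  | .pass w => .pass (substV v x w)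
end

/-! ## Heaps: finite partial maps from pointers to (annotated) heap values -/

structure Heap (A : Type) : Type where
  look : Nat → Option A
  fin : {a : Nat | look a ≠ none}.Finite

namespace Heap

def empty {A : Type} : Heap A := ⟨fun _ => none, by simp⟩

def upd {A : Type} (Γ : Heap A) (a : Nat) (v : A) : Heap A :=
  ⟨fun b => if b = a then some v else Γ.look b, by
    apply Set.Finite.subset (Γ.fin.insert a)
    intro b hb
    simp only [Set.mem_setOf_eq] at hb
    by_cases h : b = a
    · simp [h]
    · simp only [h, if_false] at hb
      exact Set.mem_insert_iff.mpr (Or.inr hb)⟩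

def erase {A : Type} (Γ : Heap A) (a : Nat) : Heap A :=
  ⟨fun b => if b = a then none else Γ.look b, by
    apply Set.Finite.subset Γ.fin
    intro b hb
    simp only [Set.mem_setOf_eq] at hb ⊢
    by_cases h : b = a
    · simp [h] at hb
    · simpa [h] using hb⟩

def eraseSet {A : Type} (Γ : Heap A) (D : Finset Nat) : Heap A :=
  ⟨fun b => if b ∈ D then none else Γ.look b, by
    apply Set.Finite.subset Γ.fin
    intro b hb
    simp only [Set.mem_setOf_eq] at hb ⊢
    by_cases h : b ∈ D
    · simp [h] at hb
    · simpa [h] using hb⟩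

def map {A B : Type} (Γ : Heap A) (f : A → B) : Heap B :=
  ⟨fun b => (Γ.look b).map f, by
    apply Set.Finite.subset Γ.fin
    intro b hb
    simp only [Set.mem_setOf_eq] at hb ⊢
    intro h
    rw [h] at hb
    simp at hb⟩

noncomputable def dom {A : Type} (Γ : Heap A) : Finset Nat := Γ.fin.toFinset

/-- Sum a numeric annotation over all cells of the heap. -/
noncomputable def total {A : Type} (Γ : Heap A) (f : A → ℕ) : ℕ :=
  ∑ a ∈ Γ.dom, (Γ.look a).elim 0 f

end Heap

/-! ## The real cost semantics ⇓ᴿ -/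

/-- Environment of top-level (possibly recursive) function definitions. -/
abbrev FEnv := String → Option (String × Expr)

abbrev RHeap := Heap HeapVal

/-- Big-step real semantics `Γ : e ⇓ᴿ_k Δ : v`.  Lambda applications and
function calls cost one step; `save`, `spend` and `pass` are no-ops. -/
inductive RBig (𝓕 : FEnv) : RHeap → Expr → Nat → RHeap → Val → Prop where
  | ret : ∀ Γ v, RBig 𝓕 Γ (.ret v) 0 Γ v
  | alloc : ∀ Γ a hv, Γ.look a = none →
      RBig 𝓕 Γ (.alloc hv) 0 (Γ.upd a hv) (.ptr a)
  | letE : ∀ Γ Δ Θ x e₁ e₂ k l v w,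
      RBig 𝓕 Γ e₁ k Δ v → RBig 𝓕 Δ (substE v x e₂) l Θ w →
      RBig 𝓕 Γ (.letE x e₁ e₂) (k + l) Θ w
  | caseL : ∀ Γ Δ v x₁ e₁ x₂ e₂ k w,
      RBig 𝓕 Γ (substE v x₁ e₁) k Δ w →
      RBig 𝓕 Γ (.caseE (.inl v) x₁ e₁ x₂ e₂) k Δ w
  | caseR : ∀ Γ Δ v x₁ e₁ x₂ e₂ k w,
      RBig 𝓕 Γ (substE v x₂ e₂) k Δ w →
      RBig 𝓕 Γ (.caseE (.inr v) x₁ e₁ x₂ e₂) k Δ w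
  | splitE : ∀ Γ Δ v₁ v₂ x y e k w,
      RBig 𝓕 Γ (substE v₂ y (substE v₁ x e)) k Δ w →
      RBig 𝓕 Γ (.splitE (.pair v₁ v₂) x y e) k Δ w
  | app : ∀ Γ Δ x e v k w,
      RBig 𝓕 Γ (substE v x e) k Δ w →
      RBig 𝓕 Γ (.app (.lam x e) v) (k + 1) Δ w
  | unfoldE : ∀ Γ a v, Γ.look a = some (.fold v) →
      RBig 𝓕 Γ (.unfoldE (.ptr a)) 0 Γ v
  | call : ∀ Γ Δ F x e v k w, 𝓕 F = some (x, e) →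
      RBig 𝓕 Γ (substE v x e) k Δ w →
      RBig 𝓕 Γ (.call F v) (k + 1) Δ w
  | force : ∀ Γ Δ a F v k w, Γ.look a = some (.lazy F v) →
      RBig 𝓕 (Γ.erase a) (.call F v) k Δ w →
      RBig 𝓕 Γ (.force (.ptr a)) k (Δ.upd a (.memo w)) w
  | recall : ∀ Γ a v, Γ.look a = some (.memo v) →
      RBig 𝓕 Γ (.force (.ptr a)) 0 Γ v
  | save : ∀ Γ m v, RBig 𝓕 Γ (.save m v) 0 Γ v
  | spend : ∀ Γ Δ m v e k w, RBig 𝓕 Γ e k Δ w →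
      RBig 𝓕 Γ (.spend m v e) k Δ w
  | pass : ∀ Γ v, RBig 𝓕 Γ (.pass v) 0 Γ v

/-! ## Credit passing style ⇓ᶜ : credits only on lazy thunks -/

/-- Heap values of the credit passing model: credit annotations
are only allowed on lazy thunks. -/
inductive CHV : Type where
  | fold : Val → CHV
  | memo : Val → CHV
  | lazy : ℕ → String → Val → CHV

abbrev CHeap := Heap CHV

/-- Allocation in the credit passing model: lazy thunks start with 0 credits. -/
def toCHV : HeapVal → CHV
  | .fold v => .fold v
  | .memo v => .memo v
  | .lazy F v => .lazy 0 F v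

/-- Big-step credit passing semantics `Γ : e ⇓ᶜ_k Δ : v`. -/
inductive CBig (𝓕 : FEnv) : CHeap → Expr → Nat → CHeap → Val → Prop where
  | ret : ∀ Γ v, CBig 𝓕 Γ (.ret v) 0 Γ v
  | alloc : ∀ Γ a hv, Γ.look a = none →
      CBig 𝓕 Γ (.alloc hv) 0 (Γ.upd a (toCHV hv)) (.ptr a)
  | letE : ∀ Γ Δ Θ x e₁ e₂ k l v w,
      CBig 𝓕 Γ e₁ k Δ v → CBig 𝓕 Δ (substE v x e₂) l Θ w →
      CBig 𝓕 Γ (.letE x e₁ e₂) (k + l) Θ w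
  | caseL : ∀ Γ Δ v x₁ e₁ x₂ e₂ k w,
      CBig 𝓕 Γ (substE v x₁ e₁) k Δ w →
      CBig 𝓕 Γ (.caseE (.inl v) x₁ e₁ x₂ e₂) k Δ w
  | caseR : ∀ Γ Δ v x₁ e₁ x₂ e₂ k w,
      CBig 𝓕 Γ (substE v x₂ e₂) k Δ w →
      CBig 𝓕 Γ (.caseE (.inr v) x₁ e₁ x₂ e₂) k Δ w
  | splitE : ∀ Γ Δ v₁ v₂ x y e k w,
      CBig 𝓕 Γ (substE v₂ y (substE v₁ x e)) k Δ w →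
      CBig 𝓕 Γ (.splitE (.pair v₁ v₂) x y e) k Δ w
  | app : ∀ Γ Δ x e v k w,
      CBig 𝓕 Γ (substE v x e) k Δ w →
      CBig 𝓕 Γ (.app (.lam x e) v) (k + 1) Δ w
  | unfoldE : ∀ Γ a v, Γ.look a = some (.fold v) →
      CBig 𝓕 Γ (.unfoldE (.ptr a)) 0 Γ v
  | call : ∀ Γ Δ F x e v k w, 𝓕 F = some (x, e) →
      CBig 𝓕 Γ (substE v x e) k Δ w →
      CBig 𝓕 Γ (.call F v) (k + 1) Δ w
  | save : ∀ Γ a n F v m, Γ.look a = some (.lazy n F v) →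
      CBig 𝓕 Γ (.save m (.ptr a)) m (Γ.upd a (.lazy (n + m) F v)) (.ptr a)
  | waste : ∀ Γ a v m, Γ.look a = some (.memo v) →
      CBig 𝓕 Γ (.save m (.ptr a)) m Γ (.ptr a)
  | force : ∀ Γ Δ a n F v k w, Γ.look a = some (.lazy n F v) →
      CBig 𝓕 (Γ.erase a) (.call F v) k Δ w → k ≤ n →
      CBig 𝓕 Γ (.force (.ptr a)) 0 (Δ.upd a (.memo w)) w
  | recall : ∀ Γ a v, Γ.look a = some (.memo v) →
      CBig 𝓕 Γ (.force (.ptr a)) 0 Γ v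

/-- The potential Φᶜ: the total number of credits on lazy thunks. -/
noncomputable def ΦC (Γ : CHeap) : ℕ :=
  Γ.total (fun hv => match hv with | .lazy n _ _ => n | _ => 0)

/-- The erasure ⌊·⌋ᶜ: drop the credit annotations. -/
def stripC (Γ : CHeap) : RHeap :=
  Γ.map (fun hv => match hv with
    | .fold v => .fold v
    | .memo v => .memo v
    | .lazy _ F v => .lazy F v)

theorem Heap.total_eq_of_subset {A : Type} (Γ : Heap A) (f : A → ℕ) (S : Finset ℕ)
    (hS : Γ.dom ⊆ S) : Γ.total f = ∑ a ∈ S, (Γ.look a).elim 0 f := by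
  unfold Heap.total
  apply Finset.sum_subset hS
  intro x _ hx
  have h : Γ.look x = none := by
    by_contra hne
    exact hx (by simpa [Heap.dom] using hne)
  simp [h]

/-- Two heaps which agree away from `a` have totals which differ only by the cell at `a`. -/
theorem Heap.total_exchange {A : Type} (Γ Δ : Heap A) (f : A → ℕ) (a : ℕ)
    (h : ∀ b, b ≠ a → Δ.look b = Γ.look b) :
    Δ.total f + (Γ.look a).elim 0 f = Γ.total f + (Δ.look a).elim 0 f := by
  have h1 := Γ.total_eq_of_subset f (insert a (Γ.dom ∪ Δ.dom))
    (fun x hx => by simp [hx])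
  have h2 := Δ.total_eq_of_subset f (insert a (Γ.dom ∪ Δ.dom))
    (fun x hx => by simp [hx])
  have ha : a ∈ insert a (Γ.dom ∪ Δ.dom) := Finset.mem_insert_self _ _
  rw [← Finset.add_sum_erase _ _ ha] at h1 h2
  have h3 : ∑ x ∈ (insert a (Γ.dom ∪ Δ.dom)).erase a, (Δ.look x).elim 0 f
      = ∑ x ∈ (insert a (Γ.dom ∪ Δ.dom)).erase a, (Γ.look x).elim 0 f := by
    apply Finset.sum_congr rfl
    intro x hx
    rw [h x (Finset.ne_of_mem_erase hx)]
  omega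

theorem Heap.ext_look {A : Type} {Γ Δ : Heap A} (h : ∀ b, Γ.look b = Δ.look b) : Γ = Δ := by
  cases Γ
  cases Δ
  simp only [Heap.mk.injEq]
  exact funext h

/-- The credits on a single (possibly absent) cell. -/
def cellCredit : Option CHV → ℕ
  | some (.lazy n _ _) => n
  | _ => 0

/-- The erasure of a single cell. -/
def stripCell : CHV → HeapVal
  | .fold v => .fold v
  | .memo v => .memo v
  | .lazy _ F v => .lazy F v

theorem stripC_look (Γ : CHeap) (a : ℕ) : (stripC Γ).look a = (Γ.look a).map stripCell := by
  simp only [stripC, Heap.map]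
  cases Γ.look a with
  | none => rfl
  | some c => cases c <;> rfl

theorem ΦC_exchange (Γ Δ : CHeap) (a : ℕ) (h : ∀ b, b ≠ a → Δ.look b = Γ.look b) :
    ΦC Δ + cellCredit (Γ.look a) = ΦC Γ + cellCredit (Δ.look a) := by
  have key : ∀ o : Option CHV, o.elim 0
      (fun hv => match hv with | .lazy n _ _ => n | _ => 0) = cellCredit o := by
    intro o
    rcases o with _ | c
    · rfl
    · cases c <;> rfl
  have := Heap.total_exchange Γ Δ
    (fun hv => match hv with | .lazy n _ _ => n | _ => 0) a h
  rw [key, key] at this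
  exact this

theorem ΦC_upd (Γ : CHeap) (a : ℕ) (c : CHV) :
    ΦC (Γ.upd a c) + cellCredit (Γ.look a) = ΦC Γ + cellCredit (some c) := by
  have := ΦC_exchange Γ (Γ.upd a c) a (fun b hb => by simp [Heap.upd, hb])
  simpa [Heap.upd] using this

theorem ΦC_erase (Γ : CHeap) (a : ℕ) :
    ΦC (Γ.erase a) + cellCredit (Γ.look a) = ΦC Γ := by
  have := ΦC_exchange Γ (Γ.erase a) a (fun b hb => by simp [Heap.erase, hb])
  simpa [Heap.erase, cellCredit] using this

theorem stripC_upd (Γ : CHeap) (a : ℕ) (c : CHV) :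
    stripC (Γ.upd a c) = (stripC Γ).upd a (stripCell c) := by
  apply Heap.ext_look
  intro b
  rw [stripC_look]
  by_cases h : b = a <;> simp [Heap.upd, h, stripC_look]

theorem stripC_erase (Γ : CHeap) (a : ℕ) :
    stripC (Γ.erase a) = (stripC Γ).erase a := by
  apply Heap.ext_look
  intro b
  rw [stripC_look]
  by_cases h : b = a <;> simp [Heap.erase, h, stripC_look]

theorem Heap.upd_same {A : Type} (Γ : Heap A) (a : ℕ) (c : A) (h : Γ.look a = some c) :
    Γ.upd a c = Γ := by
  apply Heap.ext_look
  intro b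
  by_cases hb : b = a <;> simp [Heap.upd, hb, h]

/-- **Soundness of the credit passing cost model** (Lemma
`credit-passing-sound`): whenever `Γ : e ⇓ᶜ_n Δ : v`, there exists `k` with
`⌊Γ⌋ᶜ : e ⇓ᴿ_k ⌊Δ⌋ᶜ : v` and `k + Φᶜ(Δ) − Φᶜ(Γ) ≤ n`. -/
theorem credit_passing_sound (𝓕 : FEnv) (Γ Δ : CHeap) (e : Expr) (n : ℕ) (v : Val)
    (h : CBig 𝓕 Γ e n Δ v) :
    ∃ k : ℕ, RBig 𝓕 (stripC Γ) e k (stripC Δ) v ∧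
      (k : ℤ) + (ΦC Δ : ℤ) - (ΦC Γ : ℤ) ≤ (n : ℤ) := by
  induction h with
  | ret Γ v => exact ⟨0, .ret _ _, by simp⟩
  | alloc Γ a hv ha =>
    refine ⟨0, ?_, ?_⟩
    · have h1 : stripCell (toCHV hv) = hv := by cases hv <;> rfl
      rw [stripC_upd, h1]
      exact .alloc _ _ _ (by simp [stripC_look, ha])
    · have h1 := ΦC_upd Γ a (toCHV hv)
      have h2 : cellCredit (some (toCHV hv)) = 0 := by cases hv <;> rfl
      rw [h2] at h1
      push_cast
      omega
  | letE Γ Δ Θ x e₁ e₂ k l v w _ _ ih₁ ih₂ =>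
    obtain ⟨k₁, r₁, c₁⟩ := ih₁
    obtain ⟨k₂, r₂, c₂⟩ := ih₂
    exact ⟨k₁ + k₂, .letE _ _ _ _ _ _ _ _ _ _ r₁ r₂, by push_cast; omega⟩
  | caseL Γ Δ v x₁ e₁ x₂ e₂ k w _ ih =>
    obtain ⟨k₁, r, c⟩ := ih
    exact ⟨k₁, .caseL _ _ _ _ _ _ _ _ _ r, c⟩
  | caseR Γ Δ v x₁ e₁ x₂ e₂ k w _ ih =>
    obtain ⟨k₁, r, c⟩ := ih
    exact ⟨k₁, .caseR _ _ _ _ _ _ _ _ _ r, c⟩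
  | splitE Γ Δ v₁ v₂ x y e k w _ ih =>
    obtain ⟨k₁, r, c⟩ := ih
    exact ⟨k₁, .splitE _ _ _ _ _ _ _ _ _ r, c⟩
  | app Γ Δ x e v k w _ ih =>
    obtain ⟨k₁, r, c⟩ := ih
    exact ⟨k₁ + 1, .app _ _ _ _ _ _ _ r, by push_cast; omega⟩
  | unfoldE Γ a v ha =>
    exact ⟨0, .unfoldE _ _ _ (by simp [stripC_look, ha, stripCell]), by simp⟩
  | call Γ Δ F x e v k w hF _ ih =>
    obtain ⟨k₁, r, c⟩ := ih
    exact ⟨k₁ + 1, .call _ _ _ _ _ _ _ _ hF r, by push_cast; omega⟩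
  | save Γ a n F v m ha =>
    refine ⟨0, ?_, ?_⟩
    · have h1 : (stripC Γ).upd a (stripCell (.lazy (n + m) F v)) = stripC Γ :=
        Heap.upd_same _ _ _ (by simp [stripC_look, ha, stripCell])
      rw [stripC_upd, h1]
      exact .save _ _ _
    · have h1 := ΦC_upd Γ a (.lazy (n + m) F v)
      simp only [ha, cellCredit] at h1
      push_cast
      omega
  | waste Γ a v m ha => exact ⟨0, .save _ _ _, by simp⟩
  | force Γ Δ a n F v k w ha _ hk ih =>
    obtain ⟨k₁, r, c⟩ := ih
    refine ⟨k₁, ?_, ?_⟩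
    · rw [stripC_upd]
      rw [stripC_erase] at r
      exact .force _ _ _ _ _ _ _ (by simp [stripC_look, ha, stripCell]) r
    · have h1 := ΦC_erase Γ a
      have h2 := ΦC_upd Δ a (.memo w)
      simp only [ha, cellCredit] at h1
      have h3 : cellCredit (some (.memo w)) = 0 := rfl
      rw [h3] at h2
      push_cast
      omega
  | _ =>
    rename_i Γ a v ha
    exact ⟨0, RBig.recall _ _ _ (by simp [stripC_look, ha, stripCell]), by simp⟩
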